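/- For any q ≥ 1 and any connected colored marked graph 𝒢 with exactly one edge ℓ (black with σ_ℓ = 1 or red with σ_ℓ = −1), rooted so that its vertices are 0 and ℓ, the characteristic polynomial χ_𝒢(t) = t² − ℓ̄(ξ) t − σ_ℓ c(ℓ)² is irreducible over ℚ(ξ₁,...,ξ_m) (equivalently, it does not factor into linear factors with coefficients in ℤ[ξ]). -/

import Mathlib

open Finset MvPolynomial Polynomial

/-- `A_r(ξ) = Σ_{β ∈ ℕ^m, |β|₁ = r} multinomial(r,β)² ξ^β` over `ℚ`. -/
noncomputable def Apoly (m r : ℕ) : MvPolynomial (Fin m) ℚ :=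
  ∑ β ∈ (Fintype.piFinset fun _ : Fin m => Finset.range (r + 1)).filter
      (fun β => ∑ i, β i = r),
    MvPolynomial.C ((Nat.multinomial Finset.univ β : ℚ) ^ 2) *
      ∏ i, MvPolynomial.X i ^ β i

/-- The homogeneous polynomial `∑_{|α| = d} w(α) ξ^α` with prescribed coefficients `w`. -/
noncomputable def weightedForm (m d : ℕ) (w : (Fin m → ℕ) → ℚ) : MvPolynomial (Fin m) ℚ :=
  ∑ α ∈ piAntidiag univ d, MvPolynomial.C (w α) * ∏ i, MvPolynomial.X i ^ α i

theorem filter_piFinset_range_eq_piAntidiag {m N d t : ℕ} (hd : d ≤ N) (l : Fin m → ℕ)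
    (ht : ∑ i, l i + d = t) :
    ((Fintype.piFinset fun _ : Fin m => Finset.range (N + 1)).filter
      fun α => ∑ i, (α i + l i) = t) = piAntidiag univ d := by
  ext α
  simp only [mem_filter, Fintype.mem_piFinset, mem_range, mem_piAntidiag, sum_add_distrib,
    Finset.mem_univ, implies_true, and_true]
  constructor
  · rintro ⟨-, h⟩
    change ∑ i, α i = d
    omega
  · intro h
    change ∑ i, α i = d at h
    refine ⟨fun i => ?_, by omega⟩
    have : α i ≤ ∑ i, α i :=
      Finset.single_le_sum (fun _ _ => Nat.zero_le _) (Finset.mem_univ i)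
    omega

theorem Apoly_eq_weightedForm (m r : ℕ) :
    Apoly m r = weightedForm m r fun β => (Nat.multinomial univ β : ℚ) ^ 2 := by
  have := filter_piFinset_range_eq_piAntidiag (m := m) (le_refl r) (fun _ => 0)
    (t := r) (by simp)
  simp only [add_zero] at this
  rw [Apoly, this, weightedForm]

theorem coeff_weightedForm (m d : ℕ) (w : (Fin m → ℕ) → ℚ) (e : Fin m →₀ ℕ) :
    (weightedForm m d w).coeff e = if ∑ i, e i = d then w e else 0 := by
  have key : ∀ α : Fin m → ℕ, MvPolynomial.C (w α) * ∏ i, MvPolynomial.X i ^ α i =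
      MvPolynomial.monomial (Finsupp.equivFunOnFinite.symm α) (w α) := by
    intro α
    rw [MvPolynomial.monomial_eq, Finsupp.prod_fintype _ _ (by simp)]
    rfl
  simp only [weightedForm, key, MvPolynomial.coeff_sum, MvPolynomial.coeff_monomial]
  have h2 : ∀ α : Fin m → ℕ, (Finsupp.equivFunOnFinite.symm α = e) ↔ (α = ⇑e) := by
    intro α
    rw [Equiv.symm_apply_eq]
    rfl
  simp only [h2, Finset.sum_ite_eq', mem_piAntidiag]
  simp

theorem weightedForm_add (m d : ℕ) (w w' : (Fin m → ℕ) → ℚ) :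
    weightedForm m d w + weightedForm m d w' = weightedForm m d fun α => w α + w' α := by
  simp [weightedForm, Finset.sum_add_distrib, add_mul]

theorem smul_weightedForm (m d : ℕ) (a : ℚ) (w : (Fin m → ℕ) → ℚ) :
    a • weightedForm m d w = weightedForm m d fun α => a * w α := by
  simp [weightedForm, Finset.mul_sum, MvPolynomial.smul_eq_C_mul, mul_assoc]

theorem multinomial_add_single {m : ℕ} (γ : Fin m → ℕ) (k : Fin m) :
    Nat.multinomial univ (γ + Pi.single k 1) * (γ k + 1) =
      (∑ i, γ i + 1) * Nat.multinomial univ γ := by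
  have h1 := Nat.multinomial_spec univ γ
  have h2 := Nat.multinomial_spec univ (γ + Pi.single k 1)
  have hs : ∑ i, (γ + Pi.single k 1 : Fin m → ℕ) i = ∑ i, γ i + 1 := by
    simp [Finset.sum_add_distrib]
  have hp : ∏ i, ((γ + Pi.single k 1 : Fin m → ℕ) i).factorial =
      (γ k + 1) * ∏ i, (γ i).factorial := by
    rw [← Finset.mul_prod_erase univ _ (Finset.mem_univ k),
      ← Finset.mul_prod_erase univ (fun i => (γ i).factorial) (Finset.mem_univ k), ← mul_assoc]
    congr 1
    · simp [Nat.factorial_succ]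
    · refine Finset.prod_congr rfl fun i hi => ?_
      simp [Pi.single_eq_of_ne (Finset.ne_of_mem_erase hi)]
  rw [hs, hp, Nat.factorial_succ, ← h1] at h2
  have hpos : 0 < ∏ i, (γ i).factorial := Finset.prod_pos fun i _ => Nat.factorial_pos _
  apply Nat.eq_of_mul_eq_mul_left hpos
  linarith

theorem pderiv_Apoly_succ (m q : ℕ) (k : Fin m) :
    MvPolynomial.pderiv k (Apoly m (q + 1)) = weightedForm m q fun γ =>
      ((q : ℚ) + 1) ^ 2 * (Nat.multinomial univ γ : ℚ) ^ 2 / (γ k + 1) := by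
  ext e
  rw [MvPolynomial.coeff_pderiv, Apoly_eq_weightedForm, coeff_weightedForm, coeff_weightedForm]
  have hs : ∑ i, (e + Finsupp.single k 1 : Fin m →₀ ℕ) i = ∑ i, e i + 1 := by
    simp [Finset.sum_add_distrib, Finsupp.single_apply]
  rw [hs]
  simp only [add_left_inj]
  split_ifs with h
  · have := multinomial_add_single (⇑e) k
    rw [h] at this
    have hQ : (Nat.multinomial univ (⇑e + Pi.single k 1) : ℚ) * (e k + 1) =
        (q + 1) * Nat.multinomial univ e := by exact_mod_cast this
    have he : ((e k : ℚ) + 1) ≠ 0 := by positivity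
    have hf : ((e + Finsupp.single k 1 : Fin m →₀ ℕ) : Fin m → ℕ) = ⇑e + Pi.single k 1 := by
      rw [Finsupp.coe_add, Finsupp.single_eq_pi_single]
    rw [hf, eq_div_iff he]
    linear_combination ((Nat.multinomial univ (⇑e + Pi.single k 1) : ℚ) * (e k + 1) +
      (q + 1) * Nat.multinomial univ e) * hQ
  · simp

/-- The form `ℓ(ξ)` has coefficients `(q+1) C(q,γ)² ∑ₖ nₖ / (γₖ + 1)`. -/
theorem edge_form_eq_weightedForm (m q : ℕ) (n : Fin m → ℤ) :
    ((q : ℚ) + 1)⁻¹ • ∑ i, n i • MvPolynomial.pderiv i (Apoly m (q + 1)) =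
      weightedForm m q fun γ =>
        ((q : ℚ) + 1) * (Nat.multinomial univ γ : ℚ) ^ 2 * ∑ i, (n i : ℚ) / (γ i + 1) := by
  ext e
  simp only [pderiv_Apoly_succ, MvPolynomial.coeff_smul, MvPolynomial.coeff_sum,
    coeff_weightedForm]
  split_ifs
  · have : (q : ℚ) + 1 ≠ 0 := by positivity
    rw [Finset.mul_sum, smul_eq_mul, Finset.mul_sum]
    refine Finset.sum_congr rfl fun i _ => ?_
    simp only [zsmul_eq_mul]
    field_simp
  · simp

/-- Evaluation of a form at a vector supported on two coordinates. -/
theorem aeval_weightedForm {R : Type*} [CommRing R] [Algebra ℚ R] {m d : ℕ}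
    (w : (Fin m → ℕ) → ℚ) {z y : Fin m} (hzy : z ≠ y) (a b : R) :
    MvPolynomial.aeval (Pi.single z a + Pi.single y b) (weightedForm m d w) =
      ∑ j ∈ range (d + 1), algebraMap ℚ R (w (Pi.single z j + Pi.single y (d - j))) *
        (a ^ j * b ^ (d - j)) := by
  have hz : ∀ j k : ℕ, (Pi.single z j + Pi.single y k : Fin m → ℕ) z = j := by
    intro j k; simp [Pi.single_eq_of_ne hzy]
  have hy : ∀ j k : ℕ, (Pi.single z j + Pi.single y k : Fin m → ℕ) y = k := by
    intro j k; simp [Pi.single_eq_of_ne hzy.symm]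
  have ho : ∀ (j k : ℕ) (i : Fin m), i ≠ z → i ≠ y →
      (Pi.single z j + Pi.single y k : Fin m → ℕ) i = 0 := by
    intro j k i h1 h2; simp [Pi.single_eq_of_ne h1, Pi.single_eq_of_ne h2]
  have hinj : Set.InjOn (fun j => (Pi.single z j + Pi.single y (d - j) : Fin m → ℕ))
      (range (d + 1)) := by
    intro j _ j' _ h
    have := congrFun h z
    simpa only [hz] using this
  rw [← Finset.sum_image (f := fun α : Fin m → ℕ => algebraMap ℚ R (w α) *
    (a ^ α z * b ^ α y)) hinj |>.trans (Finset.sum_congr rfl fun j _ => by simp only [hz, hy])]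
  simp only [weightedForm, map_sum, map_mul, map_prod, map_pow, MvPolynomial.aeval_X,
    MvPolynomial.algHom_C]
  have hprod : ∀ α : Fin m → ℕ, (∀ i, i ≠ z → i ≠ y → α i = 0) →
      ∏ i, (Pi.single z a + Pi.single y b : Fin m → R) i ^ α i = a ^ α z * b ^ α y := by
    intro α hα
    rw [← Finset.mul_prod_erase univ _ (Finset.mem_univ z),
      ← Finset.mul_prod_erase _ _ (Finset.mem_erase.2 ⟨hzy.symm, Finset.mem_univ y⟩),
      Finset.prod_eq_one, mul_one]
    · simp [Pi.single_eq_of_ne hzy, Pi.single_eq_of_ne hzy.symm]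
    · intro i hi
      simp only [Finset.mem_erase] at hi
      rw [hα i hi.2.1 hi.1, pow_zero]
  symm
  refine (Finset.sum_congr rfl fun α hα => ?_).trans (Finset.sum_subset ?_ ?_)
  · obtain ⟨j, -, rfl⟩ := Finset.mem_image.1 hα
    rw [hprod _ fun i => ho _ _ i]
  · intro α hα
    obtain ⟨j, hj, rfl⟩ := Finset.mem_image.1 hα
    have := Finset.mem_range.1 hj
    simp [mem_piAntidiag, Finset.sum_add_distrib]
    omega
  · intro α hα hα'
    have hsum : ∑ i, α i = d := (mem_piAntidiag.1 hα).1
    by_contra hne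
    have h0 : ∀ i, i ≠ z → i ≠ y → α i = 0 := by
      intro i h1 h2
      by_contra h3
      apply hne
      rw [Finset.prod_eq_zero (Finset.mem_univ i), mul_zero]
      simp [Pi.single_eq_of_ne h1, Pi.single_eq_of_ne h2, h3]
    have hd : α z + α y = d := by
      rw [← hsum, ← Finset.add_sum_erase univ _ (Finset.mem_univ z),
        ← Finset.add_sum_erase _ _ (Finset.mem_erase.2 ⟨hzy.symm, Finset.mem_univ y⟩),
        Finset.sum_eq_zero, add_zero]
      intro i hi
      simp only [Finset.mem_erase] at hi
      exact h0 i hi.2.1 hi.1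
    apply hα'
    refine Finset.mem_image.2 ⟨α z, Finset.mem_range.2 (by omega), ?_⟩
    ext i
    by_cases h1 : i = z
    · subst h1; exact hz _ _
    · by_cases h2 : i = y
      · subst h2; rw [hy]; omega
      · rw [ho _ _ i h1 h2, h0 i h1 h2]

theorem aeval_single_weightedForm {m d : ℕ} (w : (Fin m → ℕ) → ℚ) (k : Fin m) :
    MvPolynomial.aeval (Pi.single k (1 : ℚ)) (weightedForm m d w) = w (Pi.single k d) := by
  by_cases hk : ∃ z : Fin m, z ≠ k
  · obtain ⟨z, hz⟩ := hk
    have := aeval_weightedForm (d := d) w hz (0 : ℚ) 1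
    simpa [Finset.sum_range_succ', zero_pow] using this
  · push Not at hk
    have hα : piAntidiag (univ : Finset (Fin m)) d = {Pi.single k d} := by
      ext α
      have hu : (univ : Finset (Fin m)) = {k} := by ext i; simp [hk i]
      simp only [mem_piAntidiag, hu, sum_singleton, Finset.mem_singleton]
      constructor
      · rintro ⟨h, -⟩
        ext i
        rw [hk i]; simpa using h
      · rintro rfl
        exact ⟨by simp, fun i _ => hk i⟩
    rw [weightedForm, hα]
    simp only [sum_singleton, map_mul, MvPolynomial.algHom_C, map_prod, map_pow,
      MvPolynomial.aeval_X]
    rw [Finset.prod_eq_one]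
    · simp
    · intro i _
      rw [hk i]; simp

theorem aeval_zero_weightedForm {m d : ℕ} (w : (Fin m → ℕ) → ℚ) :
    MvPolynomial.aeval (0 : Fin m → ℚ) (weightedForm m d w) = if d = 0 then w 0 else 0 := by
  have h0 : MvPolynomial.aeval (0 : Fin m → ℚ) (weightedForm m d w) =
      (weightedForm m d w).coeff 0 := by
    simp [MvPolynomial.aeval_zero, MvPolynomial.constantCoeff_eq]
  rw [h0, coeff_weightedForm]
  simp [eq_comm]

/-- The dehomogenization `∑ⱼ C(d,j)² X^j` of `A_d` in two variables. -/
noncomputable def chooseSqPoly (d : ℕ) : ℂ[X] :=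
  ∑ j ∈ range (d + 1), Polynomial.C ((d.choose j : ℂ) ^ 2) * Polynomial.X ^ j

theorem coeff_chooseSqPoly (d j : ℕ) : (chooseSqPoly d).coeff j = (d.choose j : ℂ) ^ 2 := by
  rw [chooseSqPoly, Polynomial.finsetSum_coeff]
  simp only [Polynomial.coeff_C_mul_X_pow, Finset.sum_ite_eq, mem_range]
  split_ifs with h
  · rfl
  · rw [Nat.choose_eq_zero_of_lt (by omega)]; simp

theorem natDegree_chooseSqPoly (d : ℕ) : (chooseSqPoly d).natDegree = d := by
  refine Polynomial.natDegree_eq_of_le_of_coeff_ne_zero ?_ ?_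
  · refine Polynomial.natDegree_le_iff_coeff_eq_zero.2 fun N hN => ?_
    rw [coeff_chooseSqPoly, Nat.choose_eq_zero_of_lt hN]; simp
  · rw [coeff_chooseSqPoly]; simp

theorem chooseSqPoly_ne_zero (d : ℕ) : chooseSqPoly d ≠ 0 := by
  intro h
  have := coeff_chooseSqPoly d 0
  simp [h] at this

theorem chooseSqPoly_ode (q : ℕ) :
    Polynomial.X * (1 - Polynomial.X) * derivative (derivative (chooseSqPoly q)) =
      Polynomial.C ((q : ℂ) ^ 2) * chooseSqPoly q -
        (1 + Polynomial.C (2 * (q : ℂ) - 1) * Polynomial.X) * derivative (chooseSqPoly q) := by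
  have hrec : ∀ j : ℕ, ((j : ℂ) + 1) * (q.choose (j + 1) : ℂ) = (q - j) * (q.choose j : ℂ) := by
    intro j
    rcases le_or_gt j q with h | h
    · have := Nat.choose_succ_right_eq q j
      have h2 : ((q.choose (j + 1) * (j + 1) : ℕ) : ℂ) = ((q.choose j * (q - j) : ℕ) : ℂ) := by
        rw [this]
      push_cast [Nat.cast_sub h] at h2
      linear_combination h2
    · rw [Nat.choose_eq_zero_of_lt h, Nat.choose_eq_zero_of_lt (by omega)]; simp
  have e : Polynomial.X * (1 - Polynomial.X) * derivative (derivative (chooseSqPoly q)) =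
      Polynomial.X * derivative (derivative (chooseSqPoly q)) -
        Polynomial.X * (Polynomial.X * derivative (derivative (chooseSqPoly q))) := by ring
  have e' : (1 + Polynomial.C (2 * (q : ℂ) - 1) * Polynomial.X) * derivative (chooseSqPoly q) =
      derivative (chooseSqPoly q) +
        Polynomial.C (2 * (q : ℂ) - 1) * (Polynomial.X * derivative (chooseSqPoly q)) := by ring
  rw [e, e']
  ext j
  simp only [Polynomial.coeff_sub, Polynomial.coeff_add, Polynomial.coeff_C_mul]
  rcases j with _ | _ | j
  · have := hrec 0
    simp [Polynomial.coeff_derivative, coeff_chooseSqPoly]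
  · have := hrec 1
    simp [Polynomial.coeff_derivative, coeff_chooseSqPoly] at this ⊢
    linear_combination (2 * (q.choose 2 : ℂ) + (q - 1) * q) * this
  · have := hrec (j + 2)
    simp [Polynomial.coeff_derivative, coeff_chooseSqPoly, Polynomial.coeff_X_mul] at this ⊢
    linear_combination (((j : ℂ) + 2 + 1) * (q.choose (j + 3) : ℂ) +
      (q - (j + 2)) * (q.choose (j + 2) : ℂ)) * this

theorem rootMultiplicity_chooseSqPoly_le_one (q : ℕ) (t : ℂ) :
    (chooseSqPoly q).rootMultiplicity t ≤ 1 := by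
  by_contra! hk
  set f := chooseSqPoly q with hf
  have hf0 : f ≠ 0 := chooseSqPoly_ne_zero q
  have hroot : f.IsRoot t := (Polynomial.rootMultiplicity_pos hf0).1 (by omega)
  have ht0 : t ≠ 0 := by
    rintro rfl
    have h1 : f.coeff 0 = 0 := by rw [Polynomial.coeff_zero_eq_eval_zero]; exact hroot
    rw [hf, coeff_chooseSqPoly] at h1
    simp at h1
  have ht1 : t ≠ 1 := by
    rintro rfl
    have h1 : f.eval 1 = 0 := hroot
    rw [hf, chooseSqPoly, Polynomial.eval_finsetSum] at h1
    simp only [Polynomial.eval_mul, Polynomial.eval_C, Polynomial.eval_pow, Polynomial.eval_X,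
      one_pow, mul_one] at h1
    have h2 : ∑ j ∈ range (q + 1), (q.choose j) ^ 2 = 0 := by exact_mod_cast h1
    rw [Finset.sum_eq_zero_iff] at h2
    simpa using h2 0 (by simp)
  have hd1 := Polynomial.derivative_rootMultiplicity_of_root hroot
  have hf'0 : derivative f ≠ 0 := by
    intro h
    rw [h, Polynomial.rootMultiplicity_zero] at hd1
    omega
  have hroot' : (derivative f).IsRoot t :=
    (Polynomial.rootMultiplicity_pos hf'0).1 (by omega)
  have hd2 := Polynomial.derivative_rootMultiplicity_of_root hroot'
  set k := f.rootMultiplicity t with hkdef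
  have hdvd : (Polynomial.X - Polynomial.C t) ^ (k - 1) ∣
      Polynomial.X * (1 - Polynomial.X) * derivative (derivative f) := by
    rw [chooseSqPoly_ode]
    refine dvd_sub (Dvd.dvd.mul_left ?_ _) (Dvd.dvd.mul_left ?_ _)
    · exact (pow_dvd_pow _ (by omega)).trans (Polynomial.pow_rootMultiplicity_dvd f t)
    · have := Polynomial.pow_rootMultiplicity_dvd (derivative f) t
      rwa [hd1] at this
  have hf''0 : derivative (derivative f) ≠ 0 := by
    intro h
    have h3 : (derivative f).natDegree = 0 := Polynomial.derivative_eq_zero.1 h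
    rw [Polynomial.eq_C_of_natDegree_eq_zero h3, Polynomial.rootMultiplicity_C] at hd1
    omega
  have hcop : IsCoprime ((Polynomial.X - Polynomial.C t) ^ (k - 1))
      (Polynomial.X * (1 - Polynomial.X)) := by
    refine IsCoprime.pow_left ?_
    rw [(Polynomial.irreducible_X_sub_C t).coprime_iff_not_dvd, Polynomial.dvd_iff_isRoot]
    simp [Polynomial.IsRoot, ht0, sub_eq_zero, ht1.symm]
  have := (Polynomial.le_rootMultiplicity_iff hf''0).2 (hcop.dvd_of_dvd_mul_left hdvd)
  omega

theorem not_chooseSqPoly_dvd_sq {p q : ℕ} (hpq : p < q) :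
    ¬ chooseSqPoly q ∣ chooseSqPoly p ^ 2 := by
  intro h
  have hnd : (chooseSqPoly q).roots.Nodup := by
    rw [Multiset.nodup_iff_count_le_one]
    intro t
    rw [Polynomial.count_roots]
    exact rootMultiplicity_chooseSqPoly_le_one q t
  have hle : (chooseSqPoly q).roots ≤ (chooseSqPoly p).roots := by
    rw [Multiset.le_iff_subset hnd]
    intro t ht
    rw [Polynomial.mem_roots (chooseSqPoly_ne_zero _)] at ht ⊢
    have := ht.dvd h
    simpa [Polynomial.IsRoot] using this
  have h1 := Multiset.card_le_card hle
  rw [IsAlgClosed.card_roots_eq_natDegree, natDegree_chooseSqPoly] at h1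
  have h2 := Polynomial.card_roots' (chooseSqPoly p)
  rw [natDegree_chooseSqPoly] at h2
  omega

theorem dvd_or_dvd_or_exists_X_dvd {σ K : Type*} [Fintype σ] [Field K]
    {r s T : MvPolynomial σ K} {e : σ → ℕ}
    (h : r * s = (∏ i, MvPolynomial.X i ^ e i) * T) :
    (∃ i j, e i ≠ 0 ∧ e j ≠ 0 ∧ MvPolynomial.X i ∣ r ∧ MvPolynomial.X j ∣ s) ∨
      (∏ i, MvPolynomial.X i ^ e i) ∣ r ∨ (∏ i, MvPolynomial.X i ^ e i) ∣ s := by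
  have key : ∀ u : MvPolynomial σ K, (∀ i, e i ≠ 0 → ¬ MvPolynomial.X i ∣ u) →
      IsRelPrime (∏ i, MvPolynomial.X i ^ e i) u := by
    intro u hu
    refine IsRelPrime.prod_left fun i _ => ?_
    by_cases hi : e i = 0
    · rw [hi, pow_zero]; exact isRelPrime_one_left
    · exact ((MvPolynomial.X_prime (i := i)).irreducible.isRelPrime_iff_not_dvd.2
        (hu i hi)).pow_left
  by_cases hr : ∀ i, e i ≠ 0 → ¬ MvPolynomial.X i ∣ r
  · exact Or.inr (Or.inr ((key r hr).dvd_of_dvd_mul_left (h ▸ dvd_mul_right _ _)))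
  by_cases hs : ∀ i, e i ≠ 0 → ¬ MvPolynomial.X i ∣ s
  · exact Or.inr (Or.inl ((key s hs).dvd_of_dvd_mul_right (h ▸ dvd_mul_right _ _)))
  push Not at hr hs
  obtain ⟨i, hi, hi'⟩ := hr
  obtain ⟨j, hj, hj'⟩ := hs
  exact Or.inl ⟨i, j, hi, hj, hi', hj'⟩

theorem multinomial_single_add_single {m : ℕ} {z y : Fin m} (hzy : z ≠ y) (j k : ℕ) :
    Nat.multinomial univ (Pi.single z j + Pi.single y k) = (j + k).choose j := by
  have h := Nat.multinomial_spec univ (Pi.single z j + Pi.single y k)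
  have hs : ∑ i, (Pi.single z j + Pi.single y k : Fin m → ℕ) i = j + k := by
    simp [Finset.sum_add_distrib]
  have hp : ∏ i, ((Pi.single z j + Pi.single y k : Fin m → ℕ) i).factorial =
      j.factorial * k.factorial := by
    rw [← Finset.mul_prod_erase univ _ (Finset.mem_univ z),
      ← Finset.mul_prod_erase _ _ (Finset.mem_erase.2 ⟨hzy.symm, Finset.mem_univ y⟩),
      Finset.prod_eq_one, mul_one]
    · simp [Pi.single_eq_of_ne hzy, Pi.single_eq_of_ne hzy.symm]
    · intro i hi
      simp only [Finset.mem_erase] at hi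
      simp [Pi.single_eq_of_ne hi.1, Pi.single_eq_of_ne hi.2.1]
  have hc := Nat.choose_mul_factorial_mul_factorial (Nat.le_add_right j k)
  rw [Nat.add_sub_cancel_left] at hc
  rw [hs, hp, ← hc] at h
  refine Nat.eq_of_mul_eq_mul_right
    (Nat.mul_pos (Nat.factorial_pos j) (Nat.factorial_pos k)) ?_
  linarith

theorem multinomial_add_of_disjoint {m : ℕ} {l α : Fin m → ℕ} (h : ∀ i, l i = 0 ∨ α i = 0) :
    Nat.multinomial univ (l + α) * ((∏ i, (l i).factorial) * (∑ i, α i).factorial) =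
      (∑ i, l i + ∑ i, α i).factorial * Nat.multinomial univ α := by
  have h1 := Nat.multinomial_spec univ (l + α)
  have h2 := Nat.multinomial_spec univ α
  have hp : ∏ i, ((l + α) i).factorial = (∏ i, (l i).factorial) * ∏ i, (α i).factorial := by
    rw [← Finset.prod_mul_distrib]
    refine Finset.prod_congr rfl fun i _ => ?_
    rcases h i with h | h <;> simp [h]
  have hs : ∑ i, (l + α) i = ∑ i, l i + ∑ i, α i := by simp [Finset.sum_add_distrib]
  rw [hp, hs] at h1
  rw [← h1, ← h2]
  ring

theorem sum_div_single_add_single {m : ℕ} (n : Fin m → ℤ) {z y : Fin m} (hzy : z ≠ y)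
    (j k : ℕ) :
    ∑ i, (n i : ℚ) / (((Pi.single z j + Pi.single y k : Fin m → ℕ) i : ℕ) + 1) =
      ((∑ i, n i : ℤ) : ℚ) - n z - n y + n z / (j + 1) + n y / (k + 1) := by
  have h : ∀ f : Fin m → ℚ, ∑ i, f i = f z + (f y + ∑ i ∈ (univ.erase z).erase y, f i) := by
    intro f
    rw [Finset.add_sum_erase _ _ (Finset.mem_erase.2 ⟨hzy.symm, Finset.mem_univ y⟩),
      Finset.add_sum_erase univ _ (Finset.mem_univ z)]
  push_cast
  rw [h, h (fun i => (n i : ℚ))]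
  have h3 : ∑ i ∈ (univ.erase z).erase y,
      (n i : ℚ) / (((Pi.single z j + Pi.single y k : Fin m → ℕ) i : ℕ) + 1) =
      ∑ i ∈ (univ.erase z).erase y, (n i : ℚ) := by
    refine Finset.sum_congr rfl fun i hi => ?_
    simp only [Finset.mem_erase] at hi
    simp [Pi.single_eq_of_ne hi.1, Pi.single_eq_of_ne hi.2.1]
  rw [h3]
  simp [Pi.single_eq_of_ne hzy, Pi.single_eq_of_ne hzy.symm]
  ring

theorem sum_div_single {m : ℕ} (hm : 2 ≤ m) (n : Fin m → ℤ) (k : Fin m) (q : ℕ) :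
    ∑ i, (n i : ℚ) / (((Pi.single k q : Fin m → ℕ) i : ℕ) + 1) =
      ((∑ i, n i : ℤ) : ℚ) - n k + n k / (q + 1) := by
  have : Nontrivial (Fin m) := Fin.nontrivial_iff_two_le.2 hm
  obtain ⟨z, hz⟩ := exists_ne k
  have := sum_div_single_add_single n hz 0 q
  simp only [Pi.single_zero, zero_add] at this
  rw [this]
  push_cast
  ring

/-- Coefficients of the form `ε ℓ(ξ) + c (q+1) A_q(ξ)`, for `ℓ = ∑ᵢ nᵢ eᵢ`. -/
noncomputable def edgeWeight (m q : ℕ) (n : Fin m → ℤ) (ε c : ℚ) (γ : Fin m → ℕ) : ℚ :=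
  ((q : ℚ) + 1) * (Nat.multinomial univ γ : ℚ) ^ 2 * (c + ε * ∑ i, (n i : ℚ) / (γ i + 1))

/-- The product of multinomial coefficients occurring in `c(ℓ)`. -/
noncomputable def pairWeight {m : ℕ} (a b : Fin m → ℕ) (α : Fin m → ℕ) : ℚ :=
  (Nat.multinomial univ (a + α) : ℚ) * (Nat.multinomial univ (b + α) : ℚ)

theorem pairWeight_pos {m : ℕ} (a b α : Fin m → ℕ) : 0 < pairWeight a b α := by
  have h1 := Nat.multinomial_pos univ (a + α)
  have h2 := Nat.multinomial_pos univ (b + α)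
  unfold pairWeight
  positivity

theorem edgeWeight_single {m : ℕ} (hm : 2 ≤ m) (q : ℕ) (n : Fin m → ℤ) (ε c : ℚ) (k : Fin m) :
    edgeWeight m q n ε c (Pi.single k q) =
      (q + 1) * (c + ε * (∑ i, n i : ℤ)) - ε * q * n k := by
  have : (q : ℚ) + 1 ≠ 0 := by positivity
  rw [edgeWeight, sum_div_single hm, Nat.multinomial_single]
  field_simp
  push_cast
  ring

theorem edgeWeight_single_add_single {m : ℕ} (q : ℕ) (n : Fin m → ℤ) (ε c : ℚ) {z y : Fin m}
    (hzy : z ≠ y) {j : ℕ} (hj : j ≤ q) :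
    edgeWeight m q n ε c (Pi.single z j + Pi.single y (q - j)) =
      (q + 1) * (q.choose j) ^ 2 * (c + ε * (((∑ i, n i : ℤ) : ℚ) - n z - n y +
        n z / (j + 1) + n y / ((q - j : ℕ) + 1))) := by
  rw [edgeWeight, sum_div_single_add_single n hzy, multinomial_single_add_single hzy,
    Nat.add_sub_cancel' hj]

theorem aeval_eq_zero_of_X_dvd {m : ℕ} {R : Type*} [CommRing R] [Algebra ℚ R]
    {v : Fin m → R} {i : Fin m} (hv : v i = 0) {p : MvPolynomial (Fin m) ℚ}
    (h : MvPolynomial.X i ∣ p) : MvPolynomial.aeval v p = 0 := by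
  obtain ⟨p', rfl⟩ := h
  simp [hv]

theorem aeval_prod_X_pow_eq_zero {m : ℕ} {R : Type*} [CommRing R] [Algebra ℚ R]
    {v : Fin m → R} {e : Fin m → ℕ} {i : Fin m} (hv : v i = 0) (he : e i ≠ 0) :
    MvPolynomial.aeval v (∏ i, MvPolynomial.X i ^ e i : MvPolynomial (Fin m) ℚ) = 0 :=
  aeval_eq_zero_of_X_dvd hv
    ((dvd_pow_self _ he).trans (Finset.dvd_prod_of_mem _ (Finset.mem_univ i)))

theorem coeff_zero_aeval_single_add_single {m : ℕ} (i z : Fin m) (p : MvPolynomial (Fin m) ℚ) :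
    (MvPolynomial.aeval (Pi.single i Polynomial.X + Pi.single z 1 : Fin m → ℚ[X]) p).coeff 0 =
      MvPolynomial.aeval (Pi.single z (1 : ℚ)) p := by
  have h : (Polynomial.aeval (0 : ℚ)).comp
      (MvPolynomial.aeval (Pi.single i Polynomial.X + Pi.single z 1 : Fin m → ℚ[X])) =
      MvPolynomial.aeval (Pi.single z (1 : ℚ)) := by
    refine MvPolynomial.algHom_ext fun k => ?_
    simp only [AlgHom.comp_apply, MvPolynomial.aeval_X, Pi.add_apply, map_add, Pi.single_apply]
    split_ifs <;> simp
  rw [← h, AlgHom.comp_apply, Polynomial.coe_aeval_eq_eval, Polynomial.coeff_zero_eq_eval_zero]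

/-- If `ξᵢ r + s = -f` with `ξⱼ ∣ s`, then the coefficient of `ξᵢ ξ_z^{q-1}` of `f` is
minus the value of `r` at the basis vector `e_z`. -/
theorem aeval_single_of_X_mul_add_eq {m q : ℕ} (hq : 1 ≤ q) {w : (Fin m → ℕ) → ℚ}
    {r s : MvPolynomial (Fin m) ℚ} {i j z : Fin m} (hji : j ≠ i) (hjz : j ≠ z) (hiz : i ≠ z)
    (h : MvPolynomial.X i * r + s = -weightedForm m q w) (hs : MvPolynomial.X j ∣ s) :
    MvPolynomial.aeval (Pi.single z (1 : ℚ)) r = -w (Pi.single i 1 + Pi.single z (q - 1)) := by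
  have h1 := congrArg
    (MvPolynomial.aeval (Pi.single i Polynomial.X + Pi.single z 1 : Fin m → ℚ[X])) h
  rw [map_add, map_mul, map_neg, aeval_weightedForm w hiz, aeval_eq_zero_of_X_dvd _ hs,
    MvPolynomial.aeval_X] at h1
  · have h2 := congrArg (fun p : ℚ[X] => p.coeff 1) h1
    have hi : (Pi.single i Polynomial.X + Pi.single z 1 : Fin m → ℚ[X]) i = Polynomial.X := by
      simp [Pi.single_eq_of_ne hiz]
    simp only [hi, add_zero, Polynomial.coeff_X_mul, Polynomial.coeff_neg, one_pow, mul_one,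
      Polynomial.finsetSum_coeff] at h2
    rw [coeff_zero_aeval_single_add_single] at h2
    rw [h2]
    simp only [Polynomial.algebraMap_eq, Polynomial.coeff_C_mul_X_pow, Finset.sum_ite_eq,
      mem_range]
    rw [if_pos (by omega)]
  · simp [Pi.single_eq_of_ne hji, Pi.single_eq_of_ne hjz]

theorem exists_ne_ne_of_three_le {m : ℕ} (hm : 3 ≤ m) (i j : Fin m) : ∃ k, k ≠ i ∧ k ≠ j := by
  by_contra! h
  have hsub : (univ : Finset (Fin m)) ⊆ {i, j} := by
    intro k _
    by_cases hk : k = i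
    · simp [hk]
    · simp [h k hk]
  have := (Finset.card_le_card hsub).trans Finset.card_le_two
  rw [Finset.card_univ, Fintype.card_fin] at this
  omega

theorem card_le_card_filter_add_sum_natAbs {m : ℕ} (n : Fin m → ℤ) :
    m ≤ (univ.filter fun i => n i = 0).card + ∑ i, (n i).natAbs := by
  have h : ∑ i : Fin m, 1 ≤ ∑ i, ((if n i = 0 then 1 else 0) + (n i).natAbs) :=
    Finset.sum_le_sum fun i _ => by split_ifs <;> omega
  rw [Finset.sum_add_distrib, ← Finset.card_filter] at h
  simpa using h

/-- A factorization is impossible if the form is annihilated at a point where the monomial factor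
vanishes but the other factor does not. -/
theorem false_of_aeval_form_eq_zero {m : ℕ} {r s f T : MvPolynomial (Fin m) ℚ} {e : Fin m → ℕ}
    {σ : ℚ} (hσ : σ ≠ 0) (h1 : r + s = -f)
    (h2 : r * s = (∏ i, MvPolynomial.X i ^ e i) * (σ • T ^ 2))
    (hdvd : (∏ i, MvPolynomial.X i ^ e i) ∣ r) {v : Fin m → ℚ}
    (hmon : MvPolynomial.aeval v (∏ i, MvPolynomial.X i ^ e i : MvPolynomial (Fin m) ℚ) = 0)
    (hf : MvPolynomial.aeval v f = 0) (hT : MvPolynomial.aeval v T ≠ 0) : False := by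
  obtain ⟨r', rfl⟩ := hdvd
  have hne : (∏ i, MvPolynomial.X i ^ e i : MvPolynomial (Fin m) ℚ) ≠ 0 :=
    Finset.prod_ne_zero_iff.2 fun i _ => pow_ne_zero _ (MvPolynomial.X_ne_zero i)
  rw [mul_assoc] at h2
  have h3 := congrArg (MvPolynomial.aeval v) (mul_left_cancel₀ hne h2)
  have h4 := congrArg (MvPolynomial.aeval v) h1
  simp only [map_add, map_mul, map_neg, hmon, hf, zero_mul, zero_add, neg_zero] at h4
  rw [map_mul, h4, mul_zero, map_smul, map_pow, smul_eq_mul] at h3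
  exact mul_ne_zero hσ (pow_ne_zero 2 hT) h3.symm

theorem black_false_of_prod_dvd {q m d : ℕ} (hq : 1 ≤ q) (hm : 2 * q ≤ m) {n : Fin m → ℤ}
    (hne : n ≠ 0) (hmass : ∑ i, n i = 0) (hd : ∑ i, (n i).natAbs + 2 * d = 2 * q)
    {w : (Fin m → ℕ) → ℚ} (hw : ∀ α, 0 < w α) {e : Fin m → ℕ} (he : ∀ i, e i = (n i).natAbs)
    {r s : MvPolynomial (Fin m) ℚ} {σ : ℚ} (hσ : σ ≠ 0)
    (h1 : r + s = -weightedForm m q (edgeWeight m q n 1 0))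
    (h2 : r * s = (∏ i, MvPolynomial.X i ^ e i) * (σ • weightedForm m d w ^ 2))
    (hdvd : (∏ i, MvPolynomial.X i ^ e i) ∣ r) : False := by
  obtain ⟨i, hi⟩ := Function.ne_iff.1 hne
  have hei : e i ≠ 0 := by rw [he]; simpa using hi
  rcases Nat.eq_zero_or_pos d with rfl | hd0
  · refine false_of_aeval_form_eq_zero hσ h1 h2 hdvd (v := 0)
      (aeval_prod_X_pow_eq_zero (i := i) rfl hei) ?_ ?_
    · rw [aeval_zero_weightedForm, if_neg (by omega)]
    · rw [aeval_zero_weightedForm, if_pos rfl]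
      exact (hw _).ne'
  · have hc := card_le_card_filter_add_sum_natAbs n
    obtain ⟨z, hz⟩ : (univ.filter fun i => n i = 0).Nonempty := Finset.card_pos.1 (by omega)
    have hz : n z = 0 := by simpa using hz
    have hiz : i ≠ z := by rintro rfl; exact hi hz
    refine false_of_aeval_form_eq_zero hσ h1 h2 hdvd (v := Pi.single z 1)
      (aeval_prod_X_pow_eq_zero (i := i) (by simp [Pi.single_eq_of_ne hiz]) hei) ?_ ?_
    · rw [aeval_single_weightedForm, edgeWeight_single (by omega), hmass, hz]
      simp
    · rw [aeval_single_weightedForm]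
      exact (hw _).ne'

/-- Off the support of `a` and `b`, the weight is proportional to a squared binomial. -/
theorem pairWeight_single_add_single {m : ℕ} {a b : Fin m → ℕ} {z y : Fin m} (hzy : z ≠ y)
    (haz : a z = 0) (hay : a y = 0) (hbz : b z = 0) (hby : b y = 0) (d : ℕ) :
    ∃ K : ℚ, K ≠ 0 ∧ ∀ j ≤ d, pairWeight a b (Pi.single z j + Pi.single y (d - j)) =
      K * (d.choose j : ℚ) ^ 2 := by
  have key : ∀ l : Fin m → ℕ, l z = 0 → l y = 0 → ∃ K : ℚ, K ≠ 0 ∧ ∀ j ≤ d,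
      (Nat.multinomial univ (l + (Pi.single z j + Pi.single y (d - j))) : ℚ) =
        K * d.choose j := by
    intro l hlz hly
    refine ⟨((∑ i, l i + d).factorial : ℚ) / ((∏ i, (l i).factorial : ℕ) * d.factorial : ℚ),
      ?_, fun j hj => ?_⟩
    · have := Finset.prod_pos fun i (_ : i ∈ univ) => Nat.factorial_pos (l i)
      have h2 := Nat.factorial_pos (∑ i, l i + d)
      have h3 := Nat.factorial_pos d
      positivity
    · have hdis : ∀ i, l i = 0 ∨ (Pi.single z j + Pi.single y (d - j) : Fin m → ℕ) i = 0 := by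
        intro i
        by_cases h1 : i = z
        · exact Or.inl (h1 ▸ hlz)
        by_cases h2 : i = y
        · exact Or.inl (h2 ▸ hly)
        · exact Or.inr (by simp [Pi.single_eq_of_ne h1, Pi.single_eq_of_ne h2])
      have h := multinomial_add_of_disjoint hdis
      have hs : ∑ i, (Pi.single z j + Pi.single y (d - j) : Fin m → ℕ) i = d := by
        simp [Finset.sum_add_distrib, hj]
      rw [hs, multinomial_single_add_single hzy, Nat.add_sub_cancel' hj] at h
      have h0 := Finset.prod_pos fun i (_ : i ∈ univ) => Nat.factorial_pos (l i)
      have h3 := Nat.factorial_pos d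
      have h4 : ((∏ i, (l i).factorial : ℕ) * d.factorial : ℚ) ≠ 0 := by positivity
      rw [div_mul_eq_mul_div, eq_div_iff h4]
      exact_mod_cast h
  obtain ⟨K, hK, hK'⟩ := key a haz hay
  obtain ⟨L, hL, hL'⟩ := key b hbz hby
  refine ⟨K * L, mul_ne_zero hK hL, fun j hj => ?_⟩
  rw [pairWeight, hK' j hj, hL' j hj]
  ring

theorem aeval_weightedForm_eq_chooseSqPoly {m d : ℕ} {w : (Fin m → ℕ) → ℚ} {z y : Fin m}
    (hzy : z ≠ y) {K : ℚ} (h : ∀ j ≤ d, w (Pi.single z j + Pi.single y (d - j)) =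
      K * (d.choose j : ℚ) ^ 2) :
    MvPolynomial.aeval (Pi.single z Polynomial.X + Pi.single y 1 : Fin m → ℂ[X])
      (weightedForm m d w) = Polynomial.C (K : ℂ) * chooseSqPoly d := by
  rw [aeval_weightedForm w hzy, chooseSqPoly, Finset.mul_sum]
  refine Finset.sum_congr rfl fun j hj => ?_
  rw [h j (by rw [mem_range] at hj; omega)]
  simp [Polynomial.algebraMap_apply, mul_assoc]

theorem red_false_of_prod_dvd {q m d : ℕ} (hq : 1 ≤ q) (hm : 2 * q ≤ m) {n : Fin m → ℤ}
    (hmass : ∑ i, n i = -2) (hd : ∑ i, (n i).natAbs + 2 * d = 2 * q)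
    {e a b : Fin m → ℕ} (he : ∀ i, e i = (n i).natAbs) (ha : ∀ i, n i = 0 → a i = 0)
    (hb : ∀ i, n i = 0 → b i = 0)
    {r s : MvPolynomial (Fin m) ℚ} {σ : ℚ} (hσ : σ ≠ 0)
    (h1 : r + s = -weightedForm m q (edgeWeight m q n (-1) 2))
    (h2 : r * s = (∏ i, MvPolynomial.X i ^ e i) * (σ • weightedForm m d (pairWeight a b) ^ 2))
    (hdvd : (∏ i, MvPolynomial.X i ^ e i) ∣ r) : False := by
  obtain ⟨i, hi⟩ : ∃ i, n i ≠ 0 := by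
    by_contra! h
    simp [h] at hmass
  have hei : e i ≠ 0 := by rw [he]; simpa using hi
  rcases Nat.eq_zero_or_pos d with rfl | hd0
  · refine false_of_aeval_form_eq_zero hσ h1 h2 hdvd (v := 0)
      (aeval_prod_X_pow_eq_zero (i := i) rfl hei) ?_ ?_
    · rw [aeval_zero_weightedForm, if_neg (by omega)]
    · rw [aeval_zero_weightedForm, if_pos rfl]
      exact (pairWeight_pos _ _ _).ne'
  have hc := card_le_card_filter_add_sum_natAbs n
  obtain ⟨z, hz, y, hy, hzy⟩ := Finset.one_lt_card.1
    (show 1 < (univ.filter fun i => n i = 0).card by omega)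
  have hz : n z = 0 := by simpa using hz
  have hy : n y = 0 := by simpa using hy
  have hiz : i ≠ z := by rintro rfl; exact hi hz
  have hiy : i ≠ y := by rintro rfl; exact hi hy
  obtain ⟨K, hK, hK'⟩ := pairWeight_single_add_single hzy (ha z hz) (ha y hy) (hb z hz)
    (hb y hy) d
  have hL : ∀ j ≤ q, edgeWeight m q n (-1) 2 (Pi.single z j + Pi.single y (q - j)) =
      (4 * (q + 1)) * (q.choose j : ℚ) ^ 2 := by
    intro j hj
    rw [edgeWeight_single_add_single q n _ _ hzy hj, hmass, hz, hy]
    push_cast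
    ring
  have hφT := aeval_weightedForm_eq_chooseSqPoly hzy hK'
  have hφL := aeval_weightedForm_eq_chooseSqPoly hzy hL
  have hmon := aeval_prod_X_pow_eq_zero (e := e)
    (v := (Pi.single z Polynomial.X + Pi.single y 1 : Fin m → ℂ[X])) (i := i)
    (by simp [Pi.single_eq_of_ne hiz, Pi.single_eq_of_ne hiy]) hei
  obtain ⟨r', rfl⟩ := hdvd
  have hne : (∏ i, MvPolynomial.X i ^ e i : MvPolynomial (Fin m) ℚ) ≠ 0 :=
    Finset.prod_ne_zero_iff.2 fun i _ => pow_ne_zero _ (MvPolynomial.X_ne_zero i)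
  rw [mul_assoc] at h2
  have h3 := congrArg
    (MvPolynomial.aeval (Pi.single z Polynomial.X + Pi.single y 1 : Fin m → ℂ[X]))
    (mul_left_cancel₀ hne h2)
  have h4 := congrArg
    (MvPolynomial.aeval (Pi.single z Polynomial.X + Pi.single y 1 : Fin m → ℂ[X])) h1
  rw [map_add, map_mul, map_neg, hmon, zero_mul, zero_add, hφL] at h4
  rw [map_mul, h4, map_smul, map_pow, hφT] at h3
  have hpos : (n i).natAbs ≤ ∑ i, (n i).natAbs :=
    Finset.single_le_sum (f := fun i => (n i).natAbs) (fun _ _ => Nat.zero_le _)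
      (Finset.mem_univ i)
  refine not_chooseSqPoly_dvd_sq (show d < q by omega) ?_
  have hunit : IsUnit (Polynomial.C ((σ : ℂ) * (K : ℂ) ^ 2)) :=
    Polynomial.isUnit_C.2 (isUnit_iff_ne_zero.2 (by positivity))
  rw [← hunit.dvd_mul_left]
  refine ⟨-(MvPolynomial.aeval (Pi.single z Polynomial.X + Pi.single y 1 : Fin m → ℂ[X]) r' *
    Polynomial.C (((4 * (q + 1) : ℚ)) : ℂ)), ?_⟩
  have hs : ∀ p : ℂ[X], σ • p = Polynomial.C (σ : ℂ) * p := by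
    intro p
    rw [Algebra.smul_def]
    simp [Polynomial.algebraMap_apply]
  rw [hs] at h3
  rw [Polynomial.C_mul, Polynomial.C_pow]
  linear_combination -h3

/-- At most one coefficient of the red form at pure powers vanishes. -/
theorem red_false_of_X_dvd {q m : ℕ} (hq : 1 ≤ q) (hm : 2 * q ≤ m) (hm3 : 3 ≤ m)
    {n : Fin m → ℤ} (hmass : ∑ i, n i = -2) (hnorm : ∑ i, (n i).natAbs ≤ 2 * q)
    {r s : MvPolynomial (Fin m) ℚ}
    (h1 : r + s = -weightedForm m q (edgeWeight m q n (-1) 2)) {i j : Fin m}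
    (hr : MvPolynomial.X i ∣ r) (hs : MvPolynomial.X j ∣ s) : False := by
  have key : ∀ k, k ≠ i → k ≠ j → (4 : ℤ) * (q + 1) + q * n k = 0 := by
    intro k hki hkj
    have h3 := congrArg (MvPolynomial.aeval (Pi.single k (1 : ℚ))) h1
    rw [map_add, map_neg, aeval_single_weightedForm, edgeWeight_single (by omega), hmass,
      aeval_eq_zero_of_X_dvd (Pi.single_eq_of_ne hki.symm _) hr,
      aeval_eq_zero_of_X_dvd (Pi.single_eq_of_ne hkj.symm _) hs] at h3
    have h4 : (4 : ℚ) * (q + 1) + q * n k = 0 := by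
      push_cast at h3
      linarith
    exact_mod_cast h4
  have hle : ∀ k, (n k).natAbs ≤ 2 * q := fun k =>
    (Finset.single_le_sum (f := fun i => (n i).natAbs) (fun _ _ => Nat.zero_le _)
      (Finset.mem_univ k)).trans hnorm
  obtain ⟨k, hki, hkj⟩ := exists_ne_ne_of_three_le hm3 i j
  have hk := key k hki hkj
  have hq4 : (q : ℤ) ∣ 4 := ⟨-(n k) - 4, by linarith⟩
  have hq5 : q ≤ 4 := by exact_mod_cast Int.le_of_dvd (by norm_num) hq4
  have hlek := hle k
  have hq_eq : q = 4 := by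
    interval_cases q <;> omega
  subst hq_eq
  obtain ⟨k', hk'i, hk'j, hk'k⟩ : ∃ k', k' ≠ i ∧ k' ≠ j ∧ k' ≠ k := by
    by_contra! h
    have hsub : (univ : Finset (Fin m)) ⊆ {i, j, k} := by
      intro l _
      by_cases hli : l = i
      · simp [hli]
      by_cases hlj : l = j
      · simp [hlj]
      · simp [h l hli hlj]
    have := (Finset.card_le_card hsub).trans Finset.card_le_three
    rw [Finset.card_univ, Fintype.card_fin] at this
    omega
  have hk' := key k' hk'i hk'j
  have hpair : (n k).natAbs + (n k').natAbs ≤ ∑ i, (n i).natAbs := by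
    rw [← Finset.sum_pair (f := fun i => (n i).natAbs) hk'k.symm]
    exact Finset.sum_le_sum_of_subset (Finset.subset_univ _)
  omega

theorem pairWeight_toNat_single {m q d : ℕ} {n : Fin m → ℤ} {i j z : Fin m} (hij : i ≠ j)
    (hzi : z ≠ i) (hzj : z ≠ j) (hi : n i = 1) (hj : n j = -1)
    (h0 : ∀ k, k ≠ i → k ≠ j → n k = 0) (hd : 1 + d = q) :
    pairWeight (fun i => (n i).toNat) (fun i => (-(n i)).toNat) (Pi.single z d) =
      (q : ℚ) ^ 2 := by
  have e1 : (fun i => (n i).toNat) = Pi.single i 1 := by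
    ext t
    by_cases hti : t = i
    · subst hti
      simp [hi]
    by_cases htj : t = j
    · subst htj
      simp [hj, Pi.single_eq_of_ne hij.symm]
    · simp [h0 t hti htj, Pi.single_eq_of_ne hti]
  have e2 : (fun i => (-(n i)).toNat) = Pi.single j 1 := by
    ext t
    by_cases hti : t = i
    · subst hti
      simp [hi, Pi.single_eq_of_ne hij]
    by_cases htj : t = j
    · subst htj
      simp [hj]
    · simp [h0 t hti htj, Pi.single_eq_of_ne htj]
  rw [pairWeight, e1, e2, multinomial_single_add_single hzi.symm,
    multinomial_single_add_single hzj.symm, hd, Nat.choose_one_right, sq]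

theorem black_false_of_X_dvd {q m d : ℕ} (hq : 1 ≤ q) (hm3 : 3 ≤ m)
    {n : Fin m → ℤ} (hmass : ∑ i, n i = 0) (hd : ∑ i, (n i).natAbs + 2 * d = 2 * q)
    {r s : MvPolynomial (Fin m) ℚ}
    (h1 : r + s = -weightedForm m q (edgeWeight m q n 1 0))
    (h2 : r * s = (∏ i, MvPolynomial.X i ^ ((n i).toNat + (-(n i)).toNat)) *
      ((-((q : ℚ) + 1) ^ 2) •
        weightedForm m d (pairWeight (fun i => (n i).toNat) fun i => (-(n i)).toNat) ^ 2))
    {i j : Fin m} (hi : n i ≠ 0)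
    (hr : MvPolynomial.X i ∣ r) (hs : MvPolynomial.X j ∣ s) : False := by
  have hzero : ∀ k, k ≠ i → k ≠ j → n k = 0 := by
    intro k hki hkj
    have h3 := congrArg (MvPolynomial.aeval (Pi.single k (1 : ℚ))) h1
    rw [map_add, map_neg, aeval_single_weightedForm, edgeWeight_single (by omega), hmass,
      aeval_eq_zero_of_X_dvd (Pi.single_eq_of_ne hki.symm _) hr,
      aeval_eq_zero_of_X_dvd (Pi.single_eq_of_ne hkj.symm _) hs] at h3
    have h4 : (q : ℚ) * n k = 0 := by
      push_cast at h3
      linarith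
    have h5 : (q : ℤ) * n k = 0 := by exact_mod_cast h4
    rcases mul_eq_zero.1 h5 with h | h
    · omega
    · exact h
  have hij : i ≠ j := by
    rintro rfl
    rw [Finset.sum_eq_single i (fun k _ hk => hzero k hk hk) (by simp)] at hmass
    exact hi hmass
  have hsum : n i + n j = 0 := by
    rw [← Finset.sum_pair hij, ← hmass]
    refine Finset.sum_subset (Finset.subset_univ _) fun k _ hk => ?_
    simp only [Finset.mem_insert, Finset.mem_singleton, not_or] at hk
    exact hzero k hk.1 hk.2
  have habs : (n i).natAbs + (n j).natAbs = ∑ i, (n i).natAbs := by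
    rw [← Finset.sum_pair (f := fun i => (n i).natAbs) hij]
    refine Finset.sum_subset (Finset.subset_univ _) fun k _ hk => ?_
    simp only [Finset.mem_insert, Finset.mem_singleton, not_or] at hk
    rw [hzero k hk.1 hk.2, Int.natAbs_zero]
  obtain ⟨z, hzi, hzj⟩ := exists_ne_ne_of_three_le hm3 i j
  have hz := hzero z hzi hzj
  obtain ⟨b, hb⟩ : ∃ b, (n i).natAbs = b + 1 := ⟨(n i).natAbs - 1, by omega⟩
  have hmon : (∏ i, MvPolynomial.X i ^ ((n i).toNat + (-(n i)).toNat) :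
      MvPolynomial (Fin m) ℚ) = MvPolynomial.X i * MvPolynomial.X j *
        (MvPolynomial.X i * MvPolynomial.X j) ^ b := by
    rw [← Finset.prod_subset (Finset.subset_univ {i, j}), Finset.prod_pair hij]
    · rw [show (n i).toNat + (-(n i)).toNat = b + 1 by omega,
        show (n j).toNat + (-(n j)).toNat = b + 1 by omega]
      ring
    · intro k _ hk
      simp only [Finset.mem_insert, Finset.mem_singleton, not_or] at hk
      rw [hzero k hk.1 hk.2]
      simp
  obtain ⟨r', rfl⟩ := hr
  obtain ⟨s', rfl⟩ := hs
  have hr' := aeval_single_of_X_mul_add_eq hq hij.symm hzj.symm hzi.symm h1 (dvd_mul_right _ _)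
  rw [add_comm] at h1
  have hs' := aeval_single_of_X_mul_add_eq hq hij hzi.symm hzj.symm h1 (dvd_mul_right _ _)
  rw [edgeWeight_single_add_single q n _ _ hzi.symm hq, hmass, hz] at hr'
  rw [edgeWeight_single_add_single q n _ _ hzj.symm hq, hmass, hz] at hs'
  have h2' : r' * s' = (MvPolynomial.X i * MvPolynomial.X j) ^ b * ((-((q : ℚ) + 1) ^ 2) •
      weightedForm m d (pairWeight (fun i => (n i).toNat) fun i => (-(n i)).toNat) ^ 2) := by
    have hX : (MvPolynomial.X i * MvPolynomial.X j : MvPolynomial (Fin m) ℚ) ≠ 0 :=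
      mul_ne_zero (MvPolynomial.X_ne_zero i) (MvPolynomial.X_ne_zero j)
    apply mul_left_cancel₀ hX
    rw [← mul_assoc (MvPolynomial.X i * MvPolynomial.X j) (_ ^ b), ← hmon, ← h2]
    ring
  have h3 := congrArg (MvPolynomial.aeval (Pi.single z (1 : ℚ))) h2'
  rw [map_mul, map_mul, map_pow, map_mul, map_smul, map_pow, hr', hs', MvPolynomial.aeval_X,
    MvPolynomial.aeval_X, aeval_single_weightedForm, Pi.single_eq_of_ne hzi.symm, zero_mul,
    smul_eq_mul] at h3
  have hnj : (n j : ℚ) = -n i := by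
    have : n j = -n i := by omega
    exact_mod_cast this
  have hni : (n i : ℚ) ≠ 0 := by exact_mod_cast hi
  have hq0 : (q : ℚ) ≠ 0 := by exact_mod_cast (show q ≠ 0 by omega)
  have hq1 : (q : ℚ) + 1 ≠ 0 := by positivity
  rw [hnj] at h3
  simp only [Nat.choose_one_right, Int.cast_zero, Nat.cast_one] at h3
  rcases Nat.eq_zero_or_pos b with rfl | hb0
  · have hdq : 1 + d = q := by omega
    have hpw : pairWeight (fun i => (n i).toNat) (fun i => (-(n i)).toNat) (Pi.single z d) =
        (q : ℚ) ^ 2 := by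
      rcases Int.natAbs_eq_iff.1 hb with h | h
      · exact pairWeight_toNat_single hij hzi hzj (by omega) (by omega) hzero hdq
      · exact pairWeight_toNat_single hij.symm hzj hzi (by omega) (by omega)
          (fun k hkj hki => hzero k hki hkj) hdq
    rw [hpw] at h3
    have hsq : (n i : ℚ) ^ 2 = 1 := by
      have : (n i) ^ 2 = 1 := by
        rw [← Int.natAbs_sq, hb]; rfl
      exact_mod_cast this
    have h5 : ((q : ℚ) + 1) ^ 2 * q ^ 4 * (4 - (n i : ℚ) ^ 2) = 0 := by
      linear_combination 4 * h3
    rw [hsq] at h5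
    have : ((q : ℚ) + 1) ^ 2 * q ^ 4 ≠ 0 := by positivity
    apply this
    linarith
  · rw [zero_pow hb0.ne', zero_mul] at h3
    have h5 : ((q : ℚ) + 1) ^ 2 * q ^ 4 * (n i : ℚ) ^ 2 = 0 := by
      linear_combination -4 * h3
    have : ((q : ℚ) + 1) ^ 2 * q ^ 4 * (n i : ℚ) ^ 2 ≠ 0 := by positivity
    exact this h5

/-- Two variables, `q = 1`: the discriminant at `(1, 2)` is not a square. -/
theorem false_of_two_variables {f T : MvPolynomial (Fin 2) ℚ} {e : Fin 2 → ℕ}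
    {r s : MvPolynomial (Fin 2) ℚ} {σ a b : ℚ} (h1 : r + s = -f)
    (h2 : r * s = (∏ i, MvPolynomial.X i ^ e i) * (σ • T ^ 2)) (he : ∀ i, e i = 1)
    (hf : MvPolynomial.aeval (Pi.single 0 1 + Pi.single 1 2 : Fin 2 → ℚ) f = a)
    (hT : MvPolynomial.aeval (Pi.single 0 1 + Pi.single 1 2 : Fin 2 → ℚ) T = b)
    (hsq : ¬ IsSquare (a ^ 2 - 8 * σ * b ^ 2)) : False := by
  have h3 := congrArg (MvPolynomial.aeval (Pi.single 0 1 + Pi.single 1 2 : Fin 2 → ℚ)) h1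
  have h4 := congrArg (MvPolynomial.aeval (Pi.single 0 1 + Pi.single 1 2 : Fin 2 → ℚ)) h2
  rw [map_add, map_neg, hf] at h3
  have e0 : (Pi.single 0 1 + Pi.single 1 2 : Fin 2 → ℚ) 0 = 1 := by simp
  have e1 : (Pi.single 0 1 + Pi.single 1 2 : Fin 2 → ℚ) 1 = 2 := by simp
  rw [map_mul, map_mul, map_smul, map_pow, hT, map_prod, Fin.prod_univ_two, he, he, pow_one,
    pow_one, MvPolynomial.aeval_X, MvPolynomial.aeval_X, e0, e1, smul_eq_mul] at h4
  refine hsq ⟨MvPolynomial.aeval (Pi.single 0 1 + Pi.single 1 2 : Fin 2 → ℚ) r -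
    MvPolynomial.aeval (Pi.single 0 1 + Pi.single 1 2 : Fin 2 → ℚ) s, ?_⟩
  linear_combination (-(MvPolynomial.aeval (Pi.single 0 1 + Pi.single 1 2 : Fin 2 → ℚ) r +
    MvPolynomial.aeval (Pi.single 0 1 + Pi.single 1 2 : Fin 2 → ℚ) s) + a) * h3 + 4 * h4

theorem black_no_factorization {q m d : ℕ} (hq : 1 ≤ q) (hm : 2 * q ≤ m) {n : Fin m → ℤ}
    (hne : n ≠ 0) (hmass : ∑ i, n i = 0) (hd : ∑ i, (n i).natAbs + 2 * d = 2 * q)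
    {r s : MvPolynomial (Fin m) ℚ}
    (h1 : r + s = -weightedForm m q (edgeWeight m q n 1 0))
    (h2 : r * s = (∏ i, MvPolynomial.X i ^ ((n i).toNat + (-(n i)).toNat)) *
      ((-((q : ℚ) + 1) ^ 2) •
        weightedForm m d (pairWeight (fun i => (n i).toNat) fun i => (-(n i)).toNat) ^ 2)) :
    False := by
  have hσ : -((q : ℚ) + 1) ^ 2 ≠ 0 := neg_ne_zero.2 (by positivity)
  have he : ∀ i, (n i).toNat + (-(n i)).toNat = (n i).natAbs := fun i => by omega
  rcases Nat.lt_or_ge 2 m with hm3 | hm2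
  · rcases dvd_or_dvd_or_exists_X_dvd h2 with ⟨i, j, hi, -, hr, hs⟩ | h | h
    · exact black_false_of_X_dvd hq hm3 hmass hd h1 h2 (by rw [he] at hi; simpa using hi)
        hr hs
    · exact black_false_of_prod_dvd hq hm hne hmass hd (pairWeight_pos _ _) he hσ h1 h2 h
    · rw [add_comm] at h1
      rw [mul_comm] at h2
      exact black_false_of_prod_dvd hq hm hne hmass hd (pairWeight_pos _ _) he hσ h1 h2 h
  · obtain rfl : q = 1 := by omega
    obtain rfl : m = 2 := by omega
    rw [Fin.sum_univ_two] at hmass hd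
    have hn : ∃ i, n i ≠ 0 := Function.ne_iff.1 hne
    rw [Fin.exists_fin_two] at hn
    have h01 : (0 : Fin 2) ≠ 1 := by decide
    have hn1 : n 1 = -n 0 := by omega
    have hn0 : n 0 = 1 ∨ n 0 = -1 := by omega
    obtain rfl : d = 0 := by omega
    refine false_of_two_variables (a := n 0) (b := 1) h1 h2 ?_ ?_ ?_ ?_
    · rw [Fin.forall_fin_two, he, he]
      omega
    · rw [aeval_weightedForm _ h01]
      simp only [Finset.sum_range_succ, Finset.sum_range_zero]
      rw [edgeWeight_single_add_single _ _ _ _ h01 (by norm_num),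
        edgeWeight_single_add_single _ _ _ _ h01 (by norm_num), Fin.sum_univ_two, hn1]
      norm_num
      ring
    · rw [aeval_weightedForm _ h01]
      rcases hn0 with h | h <;>
      · simp [pairWeight, Nat.multinomial, hn1, h]
    · rcases hn0 with h | h <;> rw [h] <;> norm_num

theorem red_no_factorization {q m d : ℕ} (hq : 1 ≤ q) (hm : 2 * q ≤ m) {n : Fin m → ℤ}
    (hmass : ∑ i, n i = -2) (hd : ∑ i, (n i).natAbs + 2 * d = 2 * q)
    (hsupp : 2 ≤ (univ.filter fun i => n i ≠ 0).card)
    {r s : MvPolynomial (Fin m) ℚ}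
    (h1 : r + s = -weightedForm m q (edgeWeight m q n (-1) 2))
    (h2 : r * s = (∏ i, MvPolynomial.X i ^ ((n i).toNat + (-(n i)).toNat)) *
      (((q : ℚ) ^ 2) •
        weightedForm m d (pairWeight (fun i => (-(n i)).toNat) fun i => (n i).toNat) ^ 2)) :
    False := by
  have hσ : (q : ℚ) ^ 2 ≠ 0 := pow_ne_zero _ (by exact_mod_cast (show q ≠ 0 by omega))
  have he : ∀ i, (n i).toNat + (-(n i)).toNat = (n i).natAbs := fun i => by omega
  have ha : ∀ i, n i = 0 → (-(n i)).toNat = 0 := fun i hi => by omega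
  have hb : ∀ i, n i = 0 → (n i).toNat = 0 := fun i hi => by omega
  rcases Nat.lt_or_ge 2 m with hm3 | hm2
  · rcases dvd_or_dvd_or_exists_X_dvd h2 with ⟨i, j, -, -, hr, hs⟩ | h | h
    · exact red_false_of_X_dvd hq hm hm3 hmass (by omega) h1 hr hs
    · exact red_false_of_prod_dvd hq hm hmass hd he ha hb hσ h1 h2 h
    · rw [add_comm] at h1
      rw [mul_comm] at h2
      exact red_false_of_prod_dvd hq hm hmass hd he ha hb hσ h1 h2 h
  · obtain rfl : q = 1 := by omega
    obtain rfl : m = 2 := by omega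
    have hall : ∀ i, n i ≠ 0 := by
      have : (univ.filter fun i => n i ≠ 0) = univ := by
        rw [← Finset.card_eq_iff_eq_univ, Fintype.card_fin]
        exact le_antisymm (by simpa using Finset.card_le_univ (univ.filter fun i => n i ≠ 0)) hsupp
      intro i
      have hi := Finset.mem_univ i
      rw [← this] at hi
      simpa using hi
    have h0 := hall 0
    have h1' := hall 1
    rw [Fin.sum_univ_two] at hmass hd
    have h01 : (0 : Fin 2) ≠ 1 := by decide
    have hn0 : n 0 = -1 := by omega
    have hn1 : n 1 = -1 := by omega
    obtain rfl : d = 0 := by omega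
    refine false_of_two_variables (a := 21) (b := 2) h1 h2 ?_ ?_ ?_ ?_
    · rw [Fin.forall_fin_two, he, he]
      omega
    · rw [aeval_weightedForm _ h01]
      simp only [Finset.sum_range_succ, Finset.sum_range_zero]
      rw [edgeWeight_single_add_single _ _ _ _ h01 (by norm_num),
        edgeWeight_single_add_single _ _ _ _ h01 (by norm_num), Fin.sum_univ_two, hn1, hn0]
      norm_num
    · rw [aeval_weightedForm _ h01]
      simp [pairWeight, Nat.multinomial, hn1, hn0]
    · norm_num

/-- for any q ≥ 1 and any edge ℓ = Σᵢ nᵢeᵢ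
(|ℓ|₁ ≤ 2q, mass η(ℓ) ∈ {0,−2}, ℓ ≠ 0, ℓ ≠ −2eᵢ, support of size ≥ 2, m ≥ 2q),
the characteristic polynomial χ(t) = t² − ℓ̄(ξ) t − σ_ℓ c(ℓ)² of the one-edge
colored marked graph with vertices 0, ℓ is irreducible over ℚ(ξ): being monic
and quadratic, it does not factor into linear factors with polynomial
coefficients.  Here ℓ(ξ) = (1/(q+1)) Σᵢ nᵢ ∂A_{q+1}/∂ξᵢ; ℓ̄ = ℓ(ξ) and σ = 1
for a black edge, ℓ̄ = −ℓ(ξ) + 2(q+1)A_q and σ = −1 for a red edge; and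
c(ℓ)² = ξ^{ℓ⁺+ℓ⁻}·(prefactor·Σ_α ...)² as in formula (06''). -/
theorem one_edge_charpoly_irreducible (q m : ℕ) (hq : 1 ≤ q) (hm : 2 * q ≤ m)
    (n : Fin m → ℤ) (hnorm : ∑ i, (n i).natAbs ≤ 2 * q)
    (hmass : ∑ i, n i = 0 ∨ ∑ i, n i = -2)
    (hne : n ≠ 0)
    (hn2 : ∀ i : Fin m, n ≠ fun j => if j = i then -2 else 0)
    (hsupp : 2 ≤ (Finset.univ.filter fun i => n i ≠ 0).card) :
    let lp : Fin m → ℕ := fun i => (n i).toNat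
    let lm : Fin m → ℕ := fun i => (-(n i)).toNat
    let lpoly : MvPolynomial (Fin m) ℚ :=
      ((q : ℚ) + 1)⁻¹ • ∑ i, n i • MvPolynomial.pderiv i (Apoly m (q + 1))
    let lbar : MvPolynomial (Fin m) ℚ :=
      if ∑ i, n i = 0 then lpoly
      else -lpoly + (2 * ((q : ℚ) + 1)) • Apoly m q
    let σ : ℚ := if ∑ i, n i = 0 then 1 else -1
    let csq : MvPolynomial (Fin m) ℚ :=
      if ∑ i, n i = 0 then
        (∏ i, MvPolynomial.X i ^ (lp i + lm i)) *
          (((q : ℚ) + 1) •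
            ∑ α ∈ (Fintype.piFinset fun _ : Fin m => Finset.range (q + 1)).filter
                (fun α => ∑ i, (α i + lp i) = q),
              MvPolynomial.C
                  ((Nat.multinomial Finset.univ (fun i => lp i + α i) : ℚ) *
                    (Nat.multinomial Finset.univ (fun i => lm i + α i) : ℚ)) *
                ∏ i, MvPolynomial.X i ^ α i) ^ 2
      else
        (∏ i, MvPolynomial.X i ^ (lp i + lm i)) *
          ((q : ℚ) •
            ∑ α ∈ (Fintype.piFinset fun _ : Fin m => Finset.range (q + 1)).filter
                (fun α => ∑ i, (α i + lp i) = q - 1),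
              MvPolynomial.C
                  ((Nat.multinomial Finset.univ (fun i => lm i + α i) : ℚ) *
                    (Nat.multinomial Finset.univ (fun i => lp i + α i) : ℚ)) *
                ∏ i, MvPolynomial.X i ^ α i) ^ 2
    ¬ ∃ r s : MvPolynomial (Fin m) ℚ,
        Polynomial.X ^ 2 - Polynomial.C lbar * Polynomial.X -
            Polynomial.C (σ • csq) =
          (Polynomial.X + Polynomial.C r) * (Polynomial.X + Polynomial.C s) := by
  intro lp lm lpoly lbar σ csq
  rintro ⟨r, s, h⟩
  have h1 : r + s = -lbar := by
    have := congrArg (fun p => p.coeff 1) h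
    simp only [add_mul, mul_add, ← Polynomial.C_mul, Polynomial.coeff_add, Polynomial.coeff_sub,
      Polynomial.coeff_X_pow, Polynomial.coeff_C_mul, Polynomial.coeff_X_mul,
      Polynomial.coeff_X_one, Polynomial.coeff_C_succ, Polynomial.coeff_C_zero,
      Polynomial.coeff_X_zero] at this
    norm_num at this
    linear_combination -this
  have h2 : r * s = -(σ • csq) := by
    have := congrArg (fun p => p.coeff 0) h
    simpa using this.symm
  have hn : ∀ i, n i = (lp i : ℤ) - lm i := fun i => by simp only [lp, lm]; omega
  have habs : ∑ i, (n i).natAbs = ∑ i, lp i + ∑ i, lm i := by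
    rw [← Finset.sum_add_distrib]
    exact Finset.sum_congr rfl fun i _ => by simp only [lp, lm]; omega
  have hsum : ∑ i, n i = ((∑ i, lp i : ℕ) : ℤ) - (∑ i, lm i : ℕ) := by
    push_cast
    rw [← Finset.sum_sub_distrib]
    exact Finset.sum_congr rfl fun i _ => hn i
  rw [habs] at hnorm
  rcases hmass with hmass | hmass
  · refine black_no_factorization (d := q - ∑ i, lp i) hq hm hne hmass (by omega)
      (h1.trans ?_) (h2.trans ?_)
    · simp only [lbar, lpoly, if_pos hmass]
      rw [edge_form_eq_weightedForm]
      congr 2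
      funext γ
      rw [edgeWeight]
      ring
    · simp only [σ, csq, if_pos hmass]
      rw [filter_piFinset_range_eq_piAntidiag (d := q - ∑ i, lp i) (by omega) lp (by omega),
        one_smul, _root_.smul_pow, mul_smul_comm, mul_smul_comm, neg_smul]
      rfl
  · have hmass0 : ¬ ∑ i, n i = 0 := by omega
    refine red_no_factorization (d := q - 1 - ∑ i, lp i) hq hm hmass (by omega) hsupp
      (h1.trans ?_) (h2.trans ?_)
    · simp only [lbar, lpoly, if_neg hmass0]
      rw [edge_form_eq_weightedForm, ← neg_one_smul ℚ (weightedForm _ _ _), smul_weightedForm,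
        Apoly_eq_weightedForm, smul_weightedForm, weightedForm_add]
      congr 2
      funext γ
      rw [edgeWeight]
      ring
    · simp only [σ, csq, if_neg hmass0]
      rw [filter_piFinset_range_eq_piAntidiag (d := q - 1 - ∑ i, lp i) (by omega) lp (by omega),
        neg_one_smul, neg_neg, _root_.smul_pow]
      rfl
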